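/- The function ŵ : ΔΘ → ℝ is lower semicontinuous and concave (concave meaning ŵ(λμ + (1−λ)μ') ≥ λŵ(μ) + (1−λ)ŵ(μ') for all μ, μ' ∈ ΔΘ and λ ∈ [0,1]), and for every p̄ ∈ I(μ0) one has ŵ(μ0) ≥ ∫ ŵ dp̄. -/

import Mathlib

open MeasureTheory


/-- The Borel σ-algebra on the space of probability measures (the σ-algebra generated by
evaluation maps, i.e. the subspace σ-algebra of the Giry σ-algebra; for metrizable spaces
this is the Borel σ-algebra of the weak* topology). -/
instance probMeasurableSpace {Ω : Type*} [MeasurableSpace Ω] :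
    MeasurableSpace (ProbabilityMeasure Ω) :=
  MeasurableSpace.comap (fun μ => (μ : Measure Ω)) inferInstance

/-- Sender's expected utility from action `a` at belief `μ`. -/
noncomputable def senderEU {A Θ : Type*} [MeasurableSpace Θ]
    (uS : A → Θ → ℝ) (μ : ProbabilityMeasure Θ) (a : A) : ℝ :=
  ∫ θ, uS a θ ∂(μ : Measure Θ)

/-- The receiver's best responses `A*_R(μ)` at belief `μ`. -/
def bestResponses {A Θ : Type*} [MeasurableSpace Θ]
    (uR : A → Θ → ℝ) (μ : ProbabilityMeasure Θ) : Set A :=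
  {a | ∀ a' : A, ∫ θ, uR a' θ ∂(μ : Measure Θ) ≤ ∫ θ, uR a θ ∂(μ : Measure Θ)}

/-- The sender's upper value function `v`. -/
noncomputable def vFun {A Θ : Type*} [MeasurableSpace Θ]
    (uS uR : A → Θ → ℝ) (μ : ProbabilityMeasure Θ) : ℝ :=
  sSup (senderEU uS μ '' bestResponses uR μ)

/-- The sender's lower value function `w`. -/
noncomputable def wFun {A Θ : Type*} [MeasurableSpace Θ]
    (uS uR : A → Θ → ℝ) (μ : ProbabilityMeasure Θ) : ℝ :=
  sInf (senderEU uS μ '' bestResponses uR μ)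

/-- The set `I(μ0)` of information policies: distributions over posteriors with
barycenter equal to the prior `μ0`. -/
def infoPolicies {Θ : Type*} [MeasurableSpace Θ] (μ0 : ProbabilityMeasure Θ) :
    Set (ProbabilityMeasure (ProbabilityMeasure Θ)) :=
  {p | ∀ B : Set Θ, MeasurableSet B →
    ∫ ν, ((ν : Measure Θ) B).toReal ∂(p : Measure (ProbabilityMeasure Θ))
      = ((μ0 : Measure Θ) B).toReal}

/-- `v̂(μ0)`: the sender's best equilibrium (Bayesian persuasion) value. -/
noncomputable def vHat {A Θ : Type*} [MeasurableSpace Θ]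
    (uS uR : A → Θ → ℝ) (μ0 : ProbabilityMeasure Θ) : ℝ :=
  sSup ((fun p : ProbabilityMeasure (ProbabilityMeasure Θ) =>
    ∫ ν, vFun uS uR ν ∂(p : Measure (ProbabilityMeasure Θ))) '' infoPolicies μ0)

/-- `ŵ(μ0)`: the sender's worst equilibrium value. -/
noncomputable def wHat {A Θ : Type*} [MeasurableSpace Θ]
    (uS uR : A → Θ → ℝ) (μ0 : ProbabilityMeasure Θ) : ℝ :=
  sSup ((fun p : ProbabilityMeasure (ProbabilityMeasure Θ) =>
    ∫ ν, wFun uS uR ν ∂(p : Measure (ProbabilityMeasure Θ))) '' infoPolicies μ0)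

/-!
Extend `ŵ` to finite measures: `L m` is the supremum of `∫ W dP` over all measures `P` on `ΔΘ` with
barycenter `m`, where `W ≥ 0` is a translate of `w`. Then `L` is positively homogeneous and
superadditive, hence monotone, and grouping the posteriors of a policy into small cells approximates
`∫ W dP` by finite splittings `m = ∑ mₖ`.

For lower semicontinuity at `μ`, take a nearly optimal finite splitting of `μ`. Smoothing the
densities `dmₖ/dμ` with a partition of unity gives continuous `φₖ ≥ 0` with `∑ φₖ ≤ 1` and `φₖ μ`
close to `mₖ`. The splitting `(φₖ μ')` then depends continuously on `μ'` and, by superadditivity and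
monotonicity, bounds `L μ'` from below. Once `L` is lower semicontinuous, the same discretization
applied to `L` in place of `W` turns superadditivity into `∫ ŵ dp̄ ≤ ŵ(μ0)`, and concavity is the
case of a two-point `p̄`.
-/

section Barycenter

open ProbabilityTheory

variable {Θ : Type*} [MeasurableSpace Θ]

/-- The tautological Markov kernel, sending a belief, as a point of `ΔΘ`, to itself as a measure
on `Θ`. -/
noncomputable def beliefKernel (Θ : Type*) [MeasurableSpace Θ] :
    Kernel (ProbabilityMeasure Θ) Θ :=
  ⟨fun ν => ν, comap_measurable _⟩

instance : IsMarkovKernel (beliefKernel Θ) :=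
  ⟨fun ν => ν.prop⟩

/-- The barycenter `∫ ν dP(ν)` of a measure `P` on `ΔΘ`; it has the same total mass as `P`. -/
noncomputable abbrev barycenter (P : Measure (ProbabilityMeasure Θ)) : Measure Θ :=
  P.bind (beliefKernel Θ)

lemma barycenter_univ (P : Measure (ProbabilityMeasure Θ)) :
    barycenter P Set.univ = P Set.univ := by
  simp [Measure.bind_apply .univ (beliefKernel Θ).aemeasurable]

lemma barycenter_dirac (ν : ProbabilityMeasure Θ) : barycenter (Measure.dirac ν) = ν :=
  Measure.dirac_bind (beliefKernel Θ).measurable ν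

lemma exists_barycenter_eq (m : Measure Θ) [IsFiniteMeasure m] : ∃ P, barycenter P = m := by
  obtain rfl | hm := eq_or_ne m 0
  · exact ⟨0, Measure.bind_zero_left _⟩
  · have : NeZero m := ⟨hm⟩
    let ν : ProbabilityMeasure Θ := ⟨(m Set.univ)⁻¹ • m, inferInstance⟩
    refine ⟨m Set.univ • Measure.dirac ν, ?_⟩
    rw [barycenter, Measure.comp_smul, ← barycenter, barycenter_dirac, ProbabilityMeasure.coe_mk,
      smul_smul, ENNReal.mul_inv_cancel (by simpa using hm) (measure_ne_top _ _), one_smul]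

lemma integral_barycenter {P : Measure (ProbabilityMeasure Θ)} [IsFiniteMeasure P] {f : Θ → ℝ}
    (hf : Integrable f (barycenter P)) :
    ∫ θ, f θ ∂(barycenter P) = ∫ ν : ProbabilityMeasure Θ, ∫ θ, f θ ∂(ν : Measure Θ) ∂P := by
  rw [barycenter, Measure.comp_eq_comp_const_apply] at hf ⊢
  exact Kernel.integral_comp hf

lemma mem_infoPolicies_iff {μ : ProbabilityMeasure Θ}
    {p : ProbabilityMeasure (ProbabilityMeasure Θ)} :
    p ∈ infoPolicies μ ↔ barycenter (p : Measure (ProbabilityMeasure Θ)) = μ := by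
  have integral_apply {B : Set Θ} (hB : MeasurableSet B) :
      ∫ ν : ProbabilityMeasure Θ, ((ν : Measure Θ) B).toReal ∂(p : Measure (ProbabilityMeasure Θ))
        = (barycenter (p : Measure (ProbabilityMeasure Θ)) B).toReal := by
    rw [Measure.bind_apply hB (beliefKernel Θ).aemeasurable]
    exact integral_toReal ((beliefKernel Θ).measurable_coe hB).aemeasurable
      (ae_of_all _ fun ν => measure_lt_top _ _)
  refine ⟨fun h => Measure.ext fun B hB => ?_, fun h B hB => by rw [integral_apply hB, h]⟩
  rw [← ENNReal.toReal_eq_toReal_iff' (measure_ne_top _ _) (measure_ne_top _ _),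
    ← integral_apply hB, h B hB]

end Barycenter

section BeliefTopology

open TopologicalSpace

variable {Θ : Type*} [TopologicalSpace Θ] [CompactSpace Θ] [MeasurableSpace Θ]

lemma integrable_continuousMap {X : Type*} [TopologicalSpace X] [CompactSpace X]
    [MeasurableSpace X] [OpensMeasurableSpace X] (μ : Measure X) [IsFiniteMeasure μ]
    (f : C(X, ℝ)) : Integrable f μ :=
  (BoundedContinuousFunction.mkOfCompact f).integrable μ

lemma lipschitzWith_integral [OpensMeasurableSpace Θ] (μ : ProbabilityMeasure Θ) :
    LipschitzWith 1 fun f : C(Θ, ℝ) => ∫ θ, f θ ∂(μ : Measure Θ) := by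
  refine LipschitzWith.of_dist_le_mul fun f g => ?_
  rw [NNReal.coe_one, one_mul, dist_eq_norm, dist_eq_norm,
    ← integral_sub (integrable_continuousMap _ f) (integrable_continuousMap _ g)]
  simpa using norm_integral_le_of_norm_le_const (μ := (μ : Measure Θ))
    (ae_of_all _ (f - g).norm_coe_le_norm)

lemma continuous_integral_prod [OpensMeasurableSpace Θ] :
    Continuous fun q : C(Θ, ℝ) × ProbabilityMeasure Θ => ∫ θ, q.1 θ ∂(q.2 : Measure Θ) :=
  continuous_prod_of_continuous_lipschitzWith _ 1
    ProbabilityMeasure.continuous_integral_continuousMap lipschitzWith_integral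

/- Integration against a countable dense family of continuous functions embeds the compact space
`ΔΘ` into a countable power of `ℝ`, and this embedding is measurable. -/
instance [MetrizableSpace Θ] [BorelSpace Θ] : OpensMeasurableSpace (ProbabilityMeasure Θ) := by
  obtain ⟨D, hD_countable, hD_dense⟩ := exists_countable_dense C(Θ, ℝ)
  have : Countable D := hD_countable
  let E (ν : ProbabilityMeasure Θ) (g : D) : ℝ := ∫ θ, g.1 θ ∂(ν : Measure Θ)
  have hE_meas : Measurable E :=
    measurable_pi_lambda _ fun g =>
    (g.1.continuous.stronglyMeasurable.integral_kernel (κ := beliefKernel Θ)).measurable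
  have hE_cont : Continuous E :=
    continuous_pi fun g => ProbabilityMeasure.continuous_integral_continuousMap g.1
  have hE_inj : Function.Injective E := fun μ ν h => by
    have integral_eq : (fun f : C(Θ, ℝ) => ∫ θ, f θ ∂(μ : Measure Θ)) =
        fun f => ∫ θ, f θ ∂(ν : Measure Θ) :=
      (lipschitzWith_integral μ).continuous.ext_on hD_dense (lipschitzWith_integral ν).continuous
        fun g hg => congrFun h ⟨g, hg⟩
    exact Subtype.ext (ext_of_forall_integral_eq_of_IsFiniteMeasure
      (μ := (μ : Measure Θ)) (ν := (ν : Measure Θ)) fun f => congrFun integral_eq f.toContinuousMap)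
  refine ⟨MeasurableSpace.generateFrom_le fun s hs => ?_⟩
  obtain ⟨t, ht, rfl⟩ := (hE_cont.isClosedEmbedding hE_inj).isInducing.isOpen_iff.1 hs
  exact hE_meas ht.measurableSet

end BeliefTopology

section Perspective

open Filter Topology
open scoped ENNReal

variable {Θ : Type*} [Nonempty Θ] [MeasurableSpace Θ]

/-- The positively homogeneous extension of a function on `ΔΘ` to the cone of finite measures. -/
noncomputable def perspective (F : ProbabilityMeasure Θ → ℝ≥0∞) (m : FiniteMeasure Θ) : ℝ≥0∞ :=
  m.mass * F m.normalize

lemma lowerSemicontinuous_perspective [TopologicalSpace Θ] [OpensMeasurableSpace Θ]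
    {F : ProbabilityMeasure Θ → ℝ≥0∞} (hF : LowerSemicontinuous F) :
    LowerSemicontinuous (perspective F) := by
  intro m
  obtain rfl | hm := eq_or_ne m 0
  · exact fun y hy => by simp [perspective] at hy
  change LowerSemicontinuousAt (perspective F) m
  rw [lowerSemicontinuousAt_iff_le_liminf]
  have mass_tendsto : Tendsto (fun m' : FiniteMeasure Θ => (m'.mass : ℝ≥0∞)) (𝓝 m) (𝓝 m.mass) :=
    (ENNReal.continuous_coe.comp FiniteMeasure.continuous_mass).tendsto m
  have normalize_liminf : F m.normalize ≤ liminf (fun m' => F m'.normalize) (𝓝 m) :=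
    (lowerSemicontinuousAt_iff_le_liminf.1 (hF m.normalize)).trans
      (FiniteMeasure.tendsto_normalize_of_tendsto tendsto_id hm).liminf_le_liminf_comp
  calc perspective F m = m.mass * F m.normalize := rfl
    _ ≤ liminf (fun m' : FiniteMeasure Θ => (m'.mass : ℝ≥0∞)) (𝓝 m) *
        liminf (fun m' => F m'.normalize) (𝓝 m) := by
      rw [mass_tendsto.liminf_eq]
      gcongr
    _ ≤ liminf (perspective F) (𝓝 m) := ENNReal.le_liminf_mul

end Perspective

section Concavification

open scoped ENNReal

variable {Θ : Type*} [MeasurableSpace Θ] {W : ProbabilityMeasure Θ → ℝ≥0∞}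

/-- The concavification of `W : ΔΘ → [0, ∞]`, extended to a positively homogeneous function of
all measures `m` on `Θ` by letting the measure on `ΔΘ` with barycenter `m` have any mass. -/
noncomputable def lconcavification (W : ProbabilityMeasure Θ → ℝ≥0∞) (m : Measure Θ) : ℝ≥0∞ :=
  ⨆ (P : Measure (ProbabilityMeasure Θ)) (_ : barycenter P = m), ∫⁻ ν, W ν ∂P

lemma lintegral_le_lconcavification (P : Measure (ProbabilityMeasure Θ)) :
    ∫⁻ ν, W ν ∂P ≤ lconcavification W (barycenter P) :=
  le_iSup₂_of_le P rfl le_rfl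

lemma le_lconcavification (hW : Measurable W) (ν : ProbabilityMeasure Θ) :
    W ν ≤ lconcavification W ν := by
  simpa [barycenter_dirac, lintegral_dirac' ν hW] using
    lintegral_le_lconcavification (W := W) (Measure.dirac ν)

lemma add_lconcavification_le (m m' : Measure Θ) [IsFiniteMeasure m] [IsFiniteMeasure m'] :
    lconcavification W m + lconcavification W m' ≤ lconcavification W (m + m') := by
  refine ENNReal.biSup_add_biSup_le' (exists_barycenter_eq m) (exists_barycenter_eq m') ?_
  rintro P rfl P' rfl
  rw [← lintegral_add_measure, ← Measure.comp_add]
  exact lintegral_le_lconcavification (P + P')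

lemma lconcavification_mono {m m' : Measure Θ} [IsFiniteMeasure m'] (h : m ≤ m') :
    lconcavification W m ≤ lconcavification W m' := by
  have : IsFiniteMeasure m := isFiniteMeasure_of_le m' h
  calc lconcavification W m ≤ lconcavification W (m' - m) + lconcavification W m := le_add_self
    _ ≤ lconcavification W (m' - m + m) := add_lconcavification_le _ _
    _ = lconcavification W m' := by rw [Measure.sub_add_cancel_of_le h]

lemma sum_lconcavification_le {ι : Type*} (t : Finset ι) (m : ι → FiniteMeasure Θ) :
    ∑ i ∈ t, lconcavification W (m i) ≤ lconcavification W (∑ i ∈ t, (m i : Measure Θ)) := by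
  classical
  induction t using Finset.induction_on with
  | empty => simp
  | insert i t hi ih =>
    rw [Finset.sum_insert hi, Finset.sum_insert hi]
    exact (add_le_add_right ih _).trans (add_lconcavification_le _ _)

lemma smul_lconcavification_le (c : ℝ≥0∞) (m : Measure Θ) :
    c * lconcavification W m ≤ lconcavification W (c • m) := by
  simp_rw [lconcavification, ENNReal.mul_iSup]
  refine iSup₂_le fun P hP => ?_
  rw [← smul_eq_mul, ← lintegral_smul_measure, ← hP, ← Measure.comp_smul]
  exact lintegral_le_lconcavification (c • P)

lemma perspective_lconcavification_le [Nonempty Θ] (m : FiniteMeasure Θ) :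
    perspective (fun ν => lconcavification W ν) m ≤ lconcavification W m := by
  refine (smul_lconcavification_le _ _).trans_eq (congrArg _ ?_)
  exact congrArg FiniteMeasure.toMeasure m.self_eq_mass_smul_normalize.symm

lemma perspective_le_lconcavification [Nonempty Θ] (hW : Measurable W) (m : FiniteMeasure Θ) :
    perspective W m ≤ lconcavification W m :=
  (mul_le_mul_right (le_lconcavification hW m.normalize) _).trans
    (perspective_lconcavification_le m)

end Concavification

section Discretization

open Filter Topology
open scoped ENNReal

lemma exists_simpleFunc_forall_dist_lt {X : Type*} [PseudoMetricSpace X] [CompactSpace X]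
    [Nonempty X] [MeasurableSpace X] [OpensMeasurableSpace X] {ε : ℝ} (hε : 0 < ε) :
    ∃ s : SimpleFunc X X, ∀ x, dist (s x) x < ε := by
  have cover : ⋃ k, Metric.ball (TopologicalSpace.denseSeq X k) ε = Set.univ :=
    Set.iUnion_eq_univ_iff.2 fun x => (TopologicalSpace.denseRange_denseSeq X).exists_dist_lt x hε
  obtain ⟨t, ht⟩ := isCompact_univ.elim_finite_subcover _ (fun _ => Metric.isOpen_ball) cover.ge
  refine ⟨SimpleFunc.nearestPt (TopologicalSpace.denseSeq X) (t.sup id), fun x => ?_⟩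
  obtain ⟨k, hk, hx⟩ := Set.mem_iUnion₂.1 (ht (Set.mem_univ x))
  have dist_le := SimpleFunc.edist_nearestPt_le (TopologicalSpace.denseSeq X) x
    (t.le_sup (f := id) hk)
  rw [edist_dist, edist_dist, ENNReal.ofReal_le_ofReal_iff dist_nonneg] at dist_le
  exact dist_le.trans_lt (Metric.mem_ball'.1 hx)

lemma tendsto_fiber_smallSets {X : Type*} [PseudoMetricSpace X] {s : ℕ → X → X} {δ : ℕ → ℝ}
    (hδ : Tendsto δ atTop (𝓝 0)) (hs : ∀ n x, dist (s n x) x < δ n) (x : X) :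
    Tendsto (fun n => s n ⁻¹' {s n x}) atTop (𝓝 x).smallSets := by
  refine tendsto_smallSets_iff.2 fun U hU => ?_
  obtain ⟨ε, hε, hεU⟩ := Metric.mem_nhds_iff.1 hU
  filter_upwards [hδ.eventually_lt_const (half_pos hε)] with n hn y hy
  refine hεU ?_
  calc dist y x ≤ dist (s n y) y + dist (s n y) x := dist_triangle_left _ _ _
    _ = dist (s n y) y + dist (s n x) x := by rw [show s n y = s n x from hy]
    _ < ε := by linarith [hs n y, hs n x]

variable {Θ : Type*} [MeasurableSpace Θ]

/-- The barycenter of a finite measure on `ΔΘ`, bundled as a finite measure. -/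
noncomputable def finiteBarycenter (P : Measure (ProbabilityMeasure Θ)) [IsFiniteMeasure P] :
    FiniteMeasure Θ :=
  ⟨barycenter P, inferInstance⟩

@[simp]
lemma coe_finiteBarycenter (P : Measure (ProbabilityMeasure Θ)) [IsFiniteMeasure P] :
    (finiteBarycenter P : Measure Θ) = barycenter P :=
  rfl

lemma mass_finiteBarycenter (P : Measure (ProbabilityMeasure Θ)) [IsFiniteMeasure P] :
    ((finiteBarycenter P).mass : ℝ≥0∞) = P Set.univ := by
  rw [FiniteMeasure.ennreal_mass, coe_finiteBarycenter, barycenter_univ]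

lemma integral_normalize_finiteBarycenter [Nonempty Θ] {P : Measure (ProbabilityMeasure Θ)}
    [IsFiniteMeasure P] [NeZero P] {f : Θ → ℝ} (hf : Integrable f (barycenter P)) :
    ∫ θ, f θ ∂((finiteBarycenter P).normalize : Measure Θ) =
      ⨍ ν : ProbabilityMeasure Θ, ∫ θ, f θ ∂(ν : Measure Θ) ∂P := by
  have ne_zero : finiteBarycenter P ≠ 0 := fun h => NeZero.ne P <| by
    rw [← Measure.measure_univ_eq_zero, ← mass_finiteBarycenter, h]
    simp
  rw [← FiniteMeasure.average_eq_integral_normalize _ ne_zero, average_eq, average_eq,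
    coe_finiteBarycenter, integral_barycenter hf, Measure.real, Measure.real, barycenter_univ]

lemma sum_barycenter_restrict_preimage {β : Type*} (P : Measure (ProbabilityMeasure Θ))
    (s : SimpleFunc (ProbabilityMeasure Θ) β) :
    ∑ x ∈ s.range, barycenter (P.restrict (s ⁻¹' {x})) = barycenter P := by
  have restrict_eq : P = Measure.sum fun x : s.range => P.restrict (s ⁻¹' {x.1}) := by
    rw [← Measure.restrict_biUnion_finset (s := fun x => s ⁻¹' {x})
      (Set.pairwiseDisjoint_fiber s _) fun x => s.measurableSet_preimage _,
      Finset.set_biUnion_preimage_singleton, SimpleFunc.coe_range, Set.preimage_range,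
      Measure.restrict_univ]
  conv_rhs => rw [restrict_eq, barycenter, Measure.bind_sum _ _ (beliefKernel Θ).aemeasurable,
    Measure.sum_fintype]
  exact (Finset.sum_coe_sort s.range fun x => barycenter (P.restrict (s ⁻¹' {x}))).symm

lemma ae_measure_preimage_ne_zero {X β : Type*} [MeasurableSpace X] (P : Measure X)
    (s : SimpleFunc X β) : ∀ᵐ x ∂P, P (s ⁻¹' {s x}) ≠ 0 := by
  have null : P (⋃ y ∈ {y ∈ s.range | P (s ⁻¹' {y}) = 0}, s ⁻¹' {y}) = 0 :=
    (measure_biUnion_null_iff (Finset.countable_toSet _)).2 fun y hy => (Finset.mem_filter.1 hy).2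
  filter_upwards [measure_eq_zero_iff_ae_notMem.1 null] with x hx h
  exact hx (Set.mem_biUnion (Finset.mem_filter.2 ⟨s.mem_range_self x, h⟩) rfl)

variable [TopologicalSpace Θ] [CompactSpace Θ] [TopologicalSpace.MetrizableSpace Θ] [BorelSpace Θ]
  [Nonempty Θ] {P : Measure (ProbabilityMeasure Θ)} [IsFiniteMeasure P]

lemma tendsto_normalize_finiteBarycenter_restrict {ι : Type*} {l : Filter ι}
    {B : ι → Set (ProbabilityMeasure Θ)} {ν : ProbabilityMeasure Θ}
    (hB : Tendsto B l (𝓝 ν).smallSets) (hB_meas : ∀ i, MeasurableSet (B i))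
    (hPB : ∀ i, P (B i) ≠ 0) :
    Tendsto (fun i => (finiteBarycenter (P.restrict (B i))).normalize) l (𝓝 ν) := by
  rw [ProbabilityMeasure.tendsto_iff_forall_integral_tendsto]
  intro f
  have hf : Continuous fun ν : ProbabilityMeasure Θ => ∫ θ, f θ ∂(ν : Measure Θ) :=
    ProbabilityMeasure.continuous_integral_boundedContinuousFunction f
  rw [Metric.nhds_basis_closedBall.tendsto_right_iff]
  intro ε hε
  filter_upwards [tendsto_smallSets_iff.1 hB _ (hf.continuousAt (Metric.closedBall_mem_nhds _ hε))]
    with i hi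
  have : NeZero (P.restrict (B i)) := ⟨by simpa using hPB i⟩
  rw [integral_normalize_finiteBarycenter (f.integrable _)]
  exact (convex_closedBall _ _).set_average_mem Metric.isClosed_closedBall (hPB i)
    (measure_ne_top _ _) ((ae_restrict_mem (hB_meas i)).mono fun ν' h => hi h)
    (integrable_continuousMap P ⟨_, hf⟩).integrableOn

lemma exists_lt_sum_perspective_finiteBarycenter {F : ProbabilityMeasure Θ → ℝ≥0∞}
    (hF : LowerSemicontinuous F) {y : ℝ≥0∞} (hy : y < ∫⁻ ν, F ν ∂P) :
    ∃ s : SimpleFunc (ProbabilityMeasure Θ) (ProbabilityMeasure Θ),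
      y < ∑ x ∈ s.range, perspective F (finiteBarycenter (P.restrict (s ⁻¹' {x}))) := by
  let _ := TopologicalSpace.metrizableSpaceMetric (ProbabilityMeasure Θ)
  have : Nonempty (ProbabilityMeasure Θ) := ⟨(finiteBarycenter P).normalize⟩
  choose s hs using fun n : ℕ => exists_simpleFunc_forall_dist_lt (X := ProbabilityMeasure Θ)
    (Nat.one_div_pos_of_nat (α := ℝ) (n := n))
  let b (n : ℕ) (x : ProbabilityMeasure Θ) : ProbabilityMeasure Θ :=
    (finiteBarycenter (P.restrict (s n ⁻¹' {x}))).normalize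
  have b_tendsto : ∀ᵐ ν ∂P, Tendsto (fun n => b n (s n ν)) atTop (𝓝 ν) := by
    filter_upwards [ae_all_iff.2 fun n => ae_measure_preimage_ne_zero P (s n)] with ν hν
    exact tendsto_normalize_finiteBarycenter_restrict
      (tendsto_fiber_smallSets tendsto_one_div_add_atTop_nhds_zero_nat hs ν)
      (fun n => (s n).measurableSet_preimage _) hν
  have fatou : ∫⁻ ν, F ν ∂P ≤ liminf (fun n => ((s n).map fun x => F (b n x)).lintegral P) atTop :=
    calc ∫⁻ ν, F ν ∂P ≤ ∫⁻ ν, liminf (fun n => F (b n (s n ν))) atTop ∂P := by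
          refine lintegral_mono_ae ?_
          filter_upwards [b_tendsto] with ν hν
          exact (lowerSemicontinuousAt_iff_le_liminf.1 (hF ν)).trans hν.liminf_le_liminf_comp
      _ ≤ liminf (fun n => ∫⁻ ν, F (b n (s n ν)) ∂P) atTop :=
          lintegral_liminf_le fun n => ((s n).map fun x => F (b n x)).measurable
      _ = _ := by simp_rw [← SimpleFunc.lintegral_eq_lintegral]; rfl
  obtain ⟨n, hn⟩ := (eventually_lt_of_lt_liminf (hy.trans_le fatou)).exists
  refine ⟨s n, hn.trans_eq ?_⟩
  rw [SimpleFunc.map_lintegral]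
  refine Finset.sum_congr rfl fun x _ => ?_
  rw [perspective, mass_finiteBarycenter, Measure.restrict_apply_univ, mul_comm]

end Discretization

section ContinuousDensity

variable {Θ : Type*} [TopologicalSpace Θ] [CompactSpace Θ] [MeasurableSpace Θ]
  [OpensMeasurableSpace Θ]

/-- The finite measure with continuous density `max φ 0` with respect to `μ`. -/
noncomputable def withContinuousDensity (φ : C(Θ, ℝ))
    (μ : FiniteMeasure Θ) : FiniteMeasure Θ :=
  ⟨(μ : Measure Θ).withDensity fun θ => ENNReal.ofReal (φ θ),
    isFiniteMeasure_withDensity_ofReal (integrable_continuousMap _ φ).2⟩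

lemma coe_withContinuousDensity (φ : C(Θ, ℝ)) (μ : FiniteMeasure Θ) :
    (withContinuousDensity φ μ : Measure Θ) =
      (μ : Measure Θ).withDensity fun θ => ENNReal.ofReal (φ θ) :=
  rfl

lemma integral_withContinuousDensity {φ : C(Θ, ℝ)} (hφ : 0 ≤ φ)
    (μ : FiniteMeasure Θ) (f : Θ → ℝ) :
    ∫ θ, f θ ∂(withContinuousDensity φ μ : Measure Θ) = ∫ θ, φ θ * f θ ∂(μ : Measure Θ) := by
  rw [coe_withContinuousDensity, integral_withDensity_eq_integral_toReal_smul
    (by fun_prop) (ae_of_all _ fun _ => ENNReal.ofReal_lt_top)]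
  exact integral_congr_ae (ae_of_all _ fun θ => by
    simp only [ENNReal.toReal_ofReal (show 0 ≤ φ θ from hφ θ), smul_eq_mul])

lemma continuous_withContinuousDensity {φ : C(Θ, ℝ)} (hφ : 0 ≤ φ) :
    Continuous (withContinuousDensity φ : FiniteMeasure Θ → FiniteMeasure Θ) := by
  refine FiniteMeasure.continuous_iff_forall_continuousMap_continuous_integral.2 fun f => ?_
  simp_rw [integral_withContinuousDensity hφ]
  exact FiniteMeasure.continuous_integral_continuousMap (φ * f)

lemma sum_withContinuousDensity_le {κ : Type*} [Fintype κ]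
    {φ : κ → C(Θ, ℝ)} (hφ : ∀ k, 0 ≤ φ k) (hφ_sum : ∑ k, φ k ≤ 1) (μ : FiniteMeasure Θ) :
    ∑ k, (withContinuousDensity (φ k) μ : Measure Θ) ≤ μ := by
  have density_le (θ : Θ) : ∑ k, ENNReal.ofReal (φ k θ) ≤ 1 := by
    rw [← ENNReal.ofReal_sum_of_nonneg fun k _ => show 0 ≤ φ k θ from hφ k θ,
      ← ContinuousMap.sum_apply, ← ENNReal.ofReal_one]
    exact ENNReal.ofReal_le_ofReal (hφ_sum θ)
  refine Measure.le_iff.2 fun B hB => ?_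
  calc (∑ k, (withContinuousDensity (φ k) μ : Measure Θ)) B
      = ∫⁻ θ in B, ∑ k, ENNReal.ofReal (φ k θ) ∂μ := by
        simp_rw [Measure.finsetSum_apply, coe_withContinuousDensity, withDensity_apply _ hB]
        exact (lintegral_finsetSum _ fun k _ => by fun_prop).symm
    _ ≤ ∫⁻ _ in B, 1 ∂μ := lintegral_mono density_le
    _ = (μ : Measure Θ) B := setLIntegral_one B

end ContinuousDensity

section Smoothing

variable {X ι κ : Type*} [TopologicalSpace X] [Fintype ι]

lemma sum_partitionOfUnity (ρ : PartitionOfUnity ι X) (x : X) : ∑ c, ρ c x = 1 := by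
  rw [← finsum_eq_sum_of_fintype, ρ.sum_eq_one (Set.mem_univ x)]

variable [MeasurableSpace X]

/-- A continuous approximation of the density `dm/dμ`: its weight on the `c`-th member of the
partition of unity `ρ` is the ratio of the `m`-mass to the `μ`-mass of `ρ c`. The weight is `0`
if `ρ c` is `μ`-null, because of the convention `x / 0 = 0`. -/
noncomputable def smoothDensity (ρ : PartitionOfUnity ι X) (μ m : Measure X) : C(X, ℝ) :=
  ∑ c, ((∫ x, ρ c x ∂m) / ∫ x, ρ c x ∂μ) • ρ c

lemma smoothDensity_nonneg (ρ : PartitionOfUnity ι X) (μ m : Measure X) :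
    0 ≤ smoothDensity ρ μ m :=
  Finset.sum_nonneg fun c _ => smul_nonneg
    (div_nonneg (integral_nonneg (ρ.nonneg c)) (integral_nonneg (ρ.nonneg c))) (ρ.nonneg c)

variable [CompactSpace X] [OpensMeasurableSpace X]

lemma sum_smoothDensity_le_one [Fintype κ] (ρ : PartitionOfUnity ι X) (m : κ → Measure X)
    [∀ k, IsFiniteMeasure (m k)] : ∑ k, smoothDensity ρ (∑ j, m j) (m k) ≤ 1 := by
  intro x
  have sum_weights_le (c : ι) :
      ∑ k, (∫ y, ρ c y ∂(m k)) / (∫ y, ρ c y ∂(∑ j, m j)) * ρ c x ≤ ρ c x := by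
    rw [← Finset.sum_mul, ← Finset.sum_div,
      ← integral_finsetSum_measure fun k _ => integrable_continuousMap (m k) (ρ c)]
    exact mul_le_of_le_one_left (ρ.nonneg c x) (div_self_le_one _)
  calc (∑ k, smoothDensity ρ (∑ j, m j) (m k)) x
      = ∑ c, ∑ k, (∫ y, ρ c y ∂(m k)) / (∫ y, ρ c y ∂(∑ j, m j)) * ρ c x := by
        simp_rw [smoothDensity, ContinuousMap.sum_apply, ContinuousMap.smul_apply, smul_eq_mul]
        exact Finset.sum_comm
    _ ≤ ∑ c, ρ c x := Finset.sum_le_sum fun c _ => sum_weights_le c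
    _ = 1 := sum_partitionOfUnity ρ x

lemma abs_integral_mul_sub_le (m : Measure X) [IsFiniteMeasure m] {g f : C(X, ℝ)} (hg : 0 ≤ g)
    {a ω : ℝ} (hf : ∀ x, g x ≠ 0 → |f x - a| ≤ ω) :
    |∫ x, g x * f x ∂m - a * ∫ x, g x ∂m| ≤ ω * ∫ x, g x ∂m := by
  have pointwise (x : X) : ‖g x * f x - a * g x‖ ≤ ω * g x := by
    rw [Real.norm_eq_abs, mul_comm a, ← mul_sub, abs_mul, abs_of_nonneg (show 0 ≤ g x from hg x),
      mul_comm ω]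
    obtain hx | hx := eq_or_ne (g x) 0
    · simp [hx]
    · exact mul_le_mul_of_nonneg_left (hf x hx) (hg x)
  have hgf : Integrable (fun x => g x * f x) m := integrable_continuousMap m (g * f)
  rw [← integral_const_mul, ← integral_const_mul,
    ← integral_sub hgf ((integrable_continuousMap m g).const_mul a)]
  exact norm_integral_le_of_norm_le ((integrable_continuousMap m g).const_mul ω)
    (ae_of_all _ pointwise)

lemma abs_integral_div_mul_integral_mul_sub_le {μ m : Measure X} [IsFiniteMeasure μ]
    [IsFiniteMeasure m] (hm : m ≪ μ) {g f : C(X, ℝ)} (hg : 0 ≤ g) {a ω : ℝ}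
    (hf : ∀ x, g x ≠ 0 → |f x - a| ≤ ω) :
    |(∫ x, g x ∂m) / (∫ x, g x ∂μ) * ∫ x, g x * f x ∂μ - ∫ x, g x * f x ∂m|
      ≤ 2 * ω * ∫ x, g x ∂m := by
  set r : ℝ := (∫ x, g x ∂m) / ∫ x, g x ∂μ
  have r_mul : r * ∫ x, g x ∂μ = ∫ x, g x ∂m := by
    refine div_mul_cancel_of_imp fun h => ?_
    have ae_zero := (integral_eq_zero_iff_of_nonneg hg (integrable_continuousMap μ g)).1 h
    exact integral_eq_zero_of_ae (hm.ae_le ae_zero)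
  have r_nonneg : 0 ≤ r := div_nonneg (integral_nonneg hg) (integral_nonneg hg)
  have hμ : |r * ∫ x, g x * f x ∂μ - a * ∫ x, g x ∂m| ≤ ω * ∫ x, g x ∂m := by
    rw [← r_mul, mul_left_comm, ← mul_sub, abs_mul, abs_of_nonneg r_nonneg, mul_left_comm]
    exact mul_le_mul_of_nonneg_left (abs_integral_mul_sub_le μ hg hf) r_nonneg
  calc |r * ∫ x, g x * f x ∂μ - ∫ x, g x * f x ∂m|
      ≤ |r * ∫ x, g x * f x ∂μ - a * ∫ x, g x ∂m| +
        |∫ x, g x * f x ∂m - a * ∫ x, g x ∂m| := by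
        rw [abs_sub_comm (∫ x, g x * f x ∂m)]
        exact abs_sub_le _ _ _
    _ ≤ 2 * ω * ∫ x, g x ∂m := by linarith [abs_integral_mul_sub_le m hg hf]

lemma abs_integral_smoothDensity_mul_sub_le (ρ : PartitionOfUnity ι X) {μ m : Measure X}
    [IsFiniteMeasure μ] [IsFiniteMeasure m] (hm : m ≪ μ) {f : C(X, ℝ)} {z : ι → X} {ω : ℝ}
    (hf : ∀ c x, ρ c x ≠ 0 → |f x - f (z c)| ≤ ω) :
    |∫ x, smoothDensity ρ μ m x * f x ∂μ - ∫ x, f x ∂m| ≤ 2 * ω * m.real Set.univ := by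
  have integrable_mul (m' : Measure X) [IsFiniteMeasure m'] (c : ι) (g : C(X, ℝ)) :
      Integrable (fun x => ρ c x * g x) m' := integrable_continuousMap m' (ρ c * g)
  have integral_smooth_mul : ∫ x, smoothDensity ρ μ m x * f x ∂μ =
      ∑ c, (∫ x, ρ c x ∂m) / (∫ x, ρ c x ∂μ) * ∫ x, ρ c x * f x ∂μ := by
    simp_rw [smoothDensity, ContinuousMap.sum_apply, ContinuousMap.smul_apply, smul_eq_mul,
      Finset.sum_mul, mul_assoc]
    rw [integral_finsetSum _ fun c _ => (integrable_mul μ c f).const_mul _]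
    simp_rw [integral_const_mul]
  have integral_eq_sum (g : C(X, ℝ)) : ∫ x, g x ∂m = ∑ c, ∫ x, ρ c x * g x ∂m := by
    rw [← integral_finsetSum _ fun c _ => integrable_mul m c g]
    simp_rw [← Finset.sum_mul, sum_partitionOfUnity, one_mul]
  have mass_eq_sum : m.real Set.univ = ∑ c, ∫ x, ρ c x ∂m := by simpa using integral_eq_sum 1
  rw [integral_smooth_mul, integral_eq_sum f, ← Finset.sum_sub_distrib, mass_eq_sum,
    Finset.mul_sum]
  exact (Finset.abs_sum_le_sum_abs _ _).trans (Finset.sum_le_sum fun c _ =>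
    abs_integral_div_mul_integral_mul_sub_le hm (ρ.nonneg c) (hf c))

end Smoothing

section DensityClosure

open Filter Topology

lemma exists_partitionOfUnity_forall_dist_lt (X : Type*) [PseudoMetricSpace X] [CompactSpace X]
    {ε : ℝ} (hε : 0 < ε) :
    ∃ (t : Finset X) (ρ : PartitionOfUnity t X), ∀ c x, ρ c x ≠ 0 → dist x c < ε := by
  obtain ⟨t, ht⟩ := isCompact_univ.elim_finite_subcover (fun c : X => Metric.ball c ε)
    (fun _ => Metric.isOpen_ball) fun x _ => Set.mem_iUnion.2 ⟨x, Metric.mem_ball_self hε⟩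
  obtain ⟨ρ, hρ⟩ := PartitionOfUnity.exists_isSubordinate isClosed_univ
    (fun c : t => Metric.ball (c : X) ε) (fun _ => Metric.isOpen_ball)
    (ht.trans_eq (Set.iUnion_coe_set (t : Set X) fun c => Metric.ball (c : X) ε).symm)
  exact ⟨t, ρ, fun c x hx => hρ c (subset_tsupport _ hx)⟩

lemma tendsto_withContinuousDensity_smoothDensity {Θ : Type*} [PseudoMetricSpace Θ]
    [CompactSpace Θ] [MeasurableSpace Θ] [OpensMeasurableSpace Θ] {δ : ℕ → ℝ}
    (hδ : Tendsto δ atTop (𝓝 0)) {t : ℕ → Finset Θ} {ρ : ∀ n, PartitionOfUnity (t n) Θ}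
    (hρ : ∀ n c x, ρ n c x ≠ 0 → dist x c < δ n) {μ m : FiniteMeasure Θ}
    (hm : (m : Measure Θ) ≪ μ) :
    Tendsto (fun n => withContinuousDensity (smoothDensity (ρ n) μ m) μ) atTop (𝓝 m) := by
  rw [FiniteMeasure.tendsto_iff_forall_integral_tendsto]
  intro f
  simp_rw [integral_withContinuousDensity (smoothDensity_nonneg _ _ _)]
  rw [Metric.tendsto_nhds]
  intro ε hε
  obtain ⟨ω, hω, hωε⟩ := exists_pos_mul_lt hε (2 * (m : Measure Θ).real Set.univ)
  rw [mul_right_comm] at hωε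
  obtain ⟨η, hη, hfη⟩ := Metric.uniformContinuous_iff.1
    (CompactSpace.uniformContinuous_of_continuous f.continuous) ω hω
  filter_upwards [hδ.eventually_lt_const hη] with n hn
  exact (abs_integral_smoothDensity_mul_sub_le (ρ n) hm (f := f.toContinuousMap)
    (z := fun c => (c : Θ)) fun c x hx => (hfη ((hρ n c x hx).trans hn)).le).trans_lt hωε

lemma mem_closure_withContinuousDensity {Θ κ : Type*} [TopologicalSpace Θ] [CompactSpace Θ]
    [TopologicalSpace.MetrizableSpace Θ] [MeasurableSpace Θ] [BorelSpace Θ] [Fintype κ]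
    {μ : FiniteMeasure Θ} {m : κ → FiniteMeasure Θ}
    (hm : ∑ k, (m k : Measure Θ) = μ) :
    m ∈ closure ((fun (φ : κ → C(Θ, ℝ)) k => withContinuousDensity (φ k) μ) ''
      {φ | (∀ k, 0 ≤ φ k) ∧ ∑ k, φ k ≤ 1}) := by
  let _ := TopologicalSpace.metrizableSpaceMetric Θ
  choose t ρ hρ using fun n : ℕ =>
    exists_partitionOfUnity_forall_dist_lt Θ (Nat.one_div_pos_of_nat (α := ℝ) (n := n))
  refine mem_closure_of_tendsto (b := atTop)
    (f := fun n k => withContinuousDensity (smoothDensity (ρ n) μ (m k)) μ) ?_ ?_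
  · refine tendsto_pi_nhds.2 fun k => tendsto_withContinuousDensity_smoothDensity
      tendsto_one_div_add_atTop_nhds_zero_nat hρ (Measure.absolutelyContinuous_of_le ?_)
    rw [← hm]
    exact Finset.single_le_sum (f := fun k => (m k : Measure Θ)) (fun _ _ => Measure.zero_le _)
      (Finset.mem_univ k)
  · refine Eventually.of_forall fun n => ⟨fun k => smoothDensity (ρ n) μ (m k),
      ⟨fun k => smoothDensity_nonneg _ _ _, ?_⟩, rfl⟩
    rw [← hm]
    exact sum_smoothDensity_le_one _ _

end DensityClosure

section LowerSemicontinuity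

open scoped ENNReal

variable {Θ κ : Type*} [TopologicalSpace Θ] [CompactSpace Θ] [MeasurableSpace Θ] [Nonempty Θ]
  [Fintype κ] {W : ProbabilityMeasure Θ → ℝ≥0∞}

lemma sum_perspective_withContinuousDensity_le [OpensMeasurableSpace Θ] (hW : Measurable W)
    {φ : κ → C(Θ, ℝ)} (hφ : ∀ k, 0 ≤ φ k) (hφ_sum : ∑ k, φ k ≤ 1) (μ : FiniteMeasure Θ) :
    ∑ k, perspective W (withContinuousDensity (φ k) μ) ≤ lconcavification W μ :=
  calc ∑ k, perspective W (withContinuousDensity (φ k) μ)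
      ≤ ∑ k, lconcavification W (withContinuousDensity (φ k) μ) :=
        Finset.sum_le_sum fun _ _ => perspective_le_lconcavification hW _
    _ ≤ lconcavification W (∑ k, (withContinuousDensity (φ k) μ : Measure Θ)) :=
        sum_lconcavification_le _ _
    _ ≤ lconcavification W μ := lconcavification_mono (sum_withContinuousDensity_le hφ hφ_sum μ)

variable [TopologicalSpace.MetrizableSpace Θ] [BorelSpace Θ]

/- A splitting of `μ` whose pieces have continuous densities can be carried over to all measures
near `μ`, so it is enough to find one that is nearly optimal at `μ`. -/
lemma lowerSemicontinuous_lconcavification (hW : LowerSemicontinuous W) :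
    LowerSemicontinuous fun μ : FiniteMeasure Θ => lconcavification W μ := by
  intro μ y hy
  obtain ⟨P, hP, hyP⟩ : ∃ P, ∃ _ : barycenter P = μ, y < ∫⁻ ν, W ν ∂P := by
    simpa only [lconcavification, lt_iSup_iff] using hy
  have : IsFiniteMeasure P := ⟨by rw [← barycenter_univ, hP]; exact measure_lt_top _ _⟩
  obtain ⟨s, hs⟩ := exists_lt_sum_perspective_finiteBarycenter hW hyP
  rw [← Finset.sum_coe_sort] at hs
  have sum_pieces : ∑ x : s.range, (finiteBarycenter (P.restrict (s ⁻¹' {x.1})) : Measure Θ) = μ :=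
    (Finset.sum_coe_sort s.range fun x => barycenter (P.restrict (s ⁻¹' {x}))).trans
      ((sum_barycenter_restrict_preimage P s).trans hP)
  have hW_perspective := lowerSemicontinuous_perspective hW
  have lsc_sum : LowerSemicontinuous fun m : s.range → FiniteMeasure Θ =>
      ∑ x, perspective W (m x) :=
    lowerSemicontinuous_sum fun x _ => hW_perspective.comp (continuous_apply x)
  obtain ⟨_, hy_lt, φ, ⟨hφ, hφ_sum⟩, rfl⟩ := mem_closure_iff.1
    (mem_closure_withContinuousDensity sum_pieces) _ (lsc_sum.isOpen_preimage y) hs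
  have lsc_sum_density : LowerSemicontinuous fun μ' : FiniteMeasure Θ =>
      ∑ x, perspective W (withContinuousDensity (φ x) μ') :=
    lowerSemicontinuous_sum fun x _ =>
      hW_perspective.comp (continuous_withContinuousDensity (hφ x))
  filter_upwards [lsc_sum_density μ y hy_lt] with μ' hμ'
  exact hμ'.trans_le (sum_perspective_withContinuousDensity_le hW.measurable hφ hφ_sum μ')

lemma lintegral_lconcavification_le (hW : LowerSemicontinuous W)
    (P : Measure (ProbabilityMeasure Θ)) [IsFiniteMeasure P] :
    ∫⁻ ν, lconcavification W ν ∂P ≤ lconcavification W (barycenter P) := by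
  refine le_of_forall_lt fun y hy => ?_
  have lsc : LowerSemicontinuous fun ν : ProbabilityMeasure Θ => lconcavification W ν :=
    (lowerSemicontinuous_lconcavification hW).comp ProbabilityMeasure.toFiniteMeasure_continuous
  obtain ⟨s, hs⟩ := exists_lt_sum_perspective_finiteBarycenter lsc hy
  calc y < ∑ x ∈ s.range, perspective (fun ν => lconcavification W ν)
        (finiteBarycenter (P.restrict (s ⁻¹' {x}))) := hs
    _ ≤ ∑ x ∈ s.range, lconcavification W (finiteBarycenter (P.restrict (s ⁻¹' {x}))) :=
        Finset.sum_le_sum fun x _ => perspective_lconcavification_le _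
    _ ≤ lconcavification W (∑ x ∈ s.range, barycenter (P.restrict (s ⁻¹' {x}))) :=
        sum_lconcavification_le _ _
    _ = lconcavification W (barycenter P) := by rw [sum_barycenter_restrict_preimage]

end LowerSemicontinuity

section RealConcavification

open scoped ENNReal

variable {Θ : Type*} [MeasurableSpace Θ] {w : ProbabilityMeasure Θ → ℝ} {C : ℝ}
  {μ : ProbabilityMeasure Θ}

/-- The concavification of a real-valued function `w` on `ΔΘ`: the supremum of the mean of `w`
over the information policies with a given barycenter. -/
noncomputable def concavification (w : ProbabilityMeasure Θ → ℝ) (μ : ProbabilityMeasure Θ) : ℝ :=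
  sSup ((fun p : ProbabilityMeasure (ProbabilityMeasure Θ) =>
    ∫ ν, w ν ∂(p : Measure (ProbabilityMeasure Θ))) '' infoPolicies μ)

lemma lconcavification_eq_iSup_infoPolicies (W : ProbabilityMeasure Θ → ℝ≥0∞)
    (μ : ProbabilityMeasure Θ) :
    lconcavification W μ =
      ⨆ p : infoPolicies μ, ∫⁻ ν, W ν ∂(p.1 : Measure (ProbabilityMeasure Θ)) := by
  refine le_antisymm (iSup₂_le fun P hP => ?_)
    (iSup_le fun p => le_iSup₂_of_le p.1 (mem_infoPolicies_iff.1 p.2) le_rfl)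
  have : IsProbabilityMeasure P := ⟨by rw [← barycenter_univ, hP, measure_univ]⟩
  exact le_iSup_of_le ⟨⟨P, this⟩, mem_infoPolicies_iff.2 hP⟩ le_rfl

lemma lconcavification_ofReal_add_le (hC : ∀ ν, |w ν| ≤ C) (μ : ProbabilityMeasure Θ) :
    lconcavification (fun ν => ENNReal.ofReal (w ν + C)) μ ≤ ENNReal.ofReal (C + C) := by
  rw [lconcavification_eq_iSup_infoPolicies]
  refine iSup_le fun p => ?_
  calc ∫⁻ ν, ENNReal.ofReal (w ν + C) ∂(p.1 : Measure (ProbabilityMeasure Θ))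
      ≤ ∫⁻ _, ENNReal.ofReal (C + C) ∂(p.1 : Measure (ProbabilityMeasure Θ)) :=
        lintegral_mono fun ν =>
          ENNReal.ofReal_le_ofReal (add_le_add_left (abs_le.1 (hC ν)).2 C)
    _ = ENNReal.ofReal (C + C) := by rw [lintegral_const, measure_univ, mul_one]

lemma lconcavification_ofReal_add_ne_top (hC : ∀ ν, |w ν| ≤ C) (μ : ProbabilityMeasure Θ) :
    lconcavification (fun ν => ENNReal.ofReal (w ν + C)) μ ≠ ∞ :=
  ne_top_of_le_ne_top ENNReal.ofReal_ne_top (lconcavification_ofReal_add_le hC μ)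

lemma concavification_eq_toReal_lconcavification_sub (hw : Measurable w) (hC : ∀ ν, |w ν| ≤ C)
    (μ : ProbabilityMeasure Θ) :
    concavification w μ =
      (lconcavification (fun ν => ENNReal.ofReal (w ν + C)) μ).toReal - C := by
  let J (p : infoPolicies μ) : ℝ≥0∞ :=
    ∫⁻ ν, ENNReal.ofReal (w ν + C) ∂(p.1 : Measure (ProbabilityMeasure Θ))
  have iSup_ne_top : ⨆ p, J p ≠ ∞ := by
    simpa only [lconcavification_eq_iSup_infoPolicies] using
      lconcavification_ofReal_add_ne_top hC μ
  have integral_eq (p : infoPolicies μ) :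
      ∫ ν, w ν ∂(p.1 : Measure (ProbabilityMeasure Θ)) = (J p).toReal - C := by
    rw [← integral_eq_lintegral_of_nonneg_ae
      (ae_of_all _ fun ν => neg_le_iff_add_nonneg.1 (abs_le.1 (hC ν)).1)
      (hw.add_const C).aestronglyMeasurable,
      integral_add (.of_bound hw.aestronglyMeasurable C (ae_of_all _ hC)) (integrable_const C),
      integral_const, probReal_univ, one_smul, add_sub_cancel_right]
  have : Nonempty (infoPolicies μ) :=
    ⟨⟨Measure.dirac μ, inferInstance⟩, mem_infoPolicies_iff.2 (barycenter_dirac μ)⟩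
  calc concavification w μ = ⨆ p, ((J p).toReal - C) := by
        simp_rw [concavification, sSup_image', integral_eq]
    _ = (⨆ p, (J p).toReal) - C :=
        (ciSup_sub ⟨_, Set.forall_mem_range.2 fun p =>
          ENNReal.toReal_mono iSup_ne_top (le_iSup J p)⟩ C).symm
    _ = _ := by
        rw [← ENNReal.toReal_iSup fun p => ne_top_of_le_ne_top iSup_ne_top (le_iSup J p),
          lconcavification_eq_iSup_infoPolicies]

variable [TopologicalSpace Θ]

lemma lowerSemicontinuous_ofReal_add [OpensMeasurableSpace Θ] (hw : LowerSemicontinuous w)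
    (C : ℝ) : LowerSemicontinuous fun ν => ENNReal.ofReal (w ν + C) :=
  (ENNReal.continuous_ofReal.comp (continuous_add_const C)).comp_lowerSemicontinuous hw
    (ENNReal.ofReal_mono.comp (add_left_mono (a := C)))

variable [CompactSpace Θ] [TopologicalSpace.MetrizableSpace Θ] [BorelSpace Θ]

lemma lowerSemicontinuous_concavification (hw : LowerSemicontinuous w) (hC : ∀ ν, |w ν| ≤ C) :
    LowerSemicontinuous (concavification w) := by
  intro μ₀
  have : Nonempty Θ := nonempty_of_isProbabilityMeasure (μ₀ : Measure Θ)
  have concavification_eq : concavification w = fun μ : ProbabilityMeasure Θ =>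
      ENNReal.truncateToReal (ENNReal.ofReal (C + C))
        (lconcavification (fun ν => ENNReal.ofReal (w ν + C)) μ) - C := funext fun μ => by
    rw [concavification_eq_toReal_lconcavification_sub hw.measurable hC,
      ENNReal.truncateToReal_eq_toReal ENNReal.ofReal_ne_top (lconcavification_ofReal_add_le hC μ)]
  rw [concavification_eq]
  exact ((continuous_sub_right C).comp
    (ENNReal.continuous_truncateToReal ENNReal.ofReal_ne_top)).comp_lowerSemicontinuous
    ((lowerSemicontinuous_lconcavification (lowerSemicontinuous_ofReal_add hw C)).comp
      ProbabilityMeasure.toFiniteMeasure_continuous)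
    (fun _ _ h => sub_le_sub_right (ENNReal.monotone_truncateToReal ENNReal.ofReal_ne_top h) C) μ₀

lemma integral_concavification_le (hw : LowerSemicontinuous w) (hC : ∀ ν, |w ν| ≤ C)
    {p : ProbabilityMeasure (ProbabilityMeasure Θ)} (hp : p ∈ infoPolicies μ) :
    ∫ ν, concavification w ν ∂(p : Measure (ProbabilityMeasure Θ)) ≤ concavification w μ := by
  have : Nonempty Θ := nonempty_of_isProbabilityMeasure (μ : Measure Θ)
  let L (ν : ProbabilityMeasure Θ) : ℝ≥0∞ :=
    lconcavification (fun ν => ENNReal.ofReal (w ν + C)) ν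
  have hL_ne_top (ν : ProbabilityMeasure Θ) : L ν ≠ ∞ := lconcavification_ofReal_add_ne_top hC ν
  have hL_meas : Measurable L := LowerSemicontinuous.measurable <|
    (lowerSemicontinuous_lconcavification (lowerSemicontinuous_ofReal_add hw C)).comp
      ProbabilityMeasure.toFiniteMeasure_continuous
  have lintegral_le : ∫⁻ ν, L ν ∂(p : Measure (ProbabilityMeasure Θ)) ≤ L μ :=
    (lintegral_lconcavification_le (lowerSemicontinuous_ofReal_add hw C) _).trans_eq
      (by rw [mem_infoPolicies_iff.1 hp])
  have hL_int : Integrable (fun ν => (L ν).toReal) (p : Measure (ProbabilityMeasure Θ)) :=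
    integrable_toReal_of_lintegral_ne_top hL_meas.aemeasurable
      (ne_top_of_le_ne_top (hL_ne_top μ) lintegral_le)
  simp_rw [concavification_eq_toReal_lconcavification_sub hw.measurable hC]
  calc ∫ ν, ((L ν).toReal - C) ∂(p : Measure (ProbabilityMeasure Θ))
      = (∫⁻ ν, L ν ∂(p : Measure (ProbabilityMeasure Θ))).toReal - C := by
        rw [integral_sub hL_int (integrable_const C), integral_const, probReal_univ, one_smul,
          integral_toReal hL_meas.aemeasurable (ae_of_all _ fun ν => (hL_ne_top ν).lt_top)]
    _ ≤ (L μ).toReal - C := sub_le_sub_right (ENNReal.toReal_mono (hL_ne_top μ) lintegral_le) C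

lemma convexComb_le_concavification (hw : LowerSemicontinuous w) (hC : ∀ ν, |w ν| ≤ C)
    {μ μ' ν : ProbabilityMeasure Θ} {lam : ℝ} (h_nonneg : 0 ≤ lam) (h_le_one : lam ≤ 1)
    (hν : (ν : Measure Θ) =
      ENNReal.ofReal lam • (μ : Measure Θ) + ENNReal.ofReal (1 - lam) • (μ' : Measure Θ)) :
    lam * concavification w μ + (1 - lam) * concavification w μ' ≤ concavification w ν := by
  let P : Measure (ProbabilityMeasure Θ) :=
    ENNReal.ofReal lam • .dirac μ + ENNReal.ofReal (1 - lam) • .dirac μ'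
  have hP : barycenter P = ν := by
    rw [hν, ← barycenter_dirac μ, ← barycenter_dirac μ']
    simp only [P, barycenter, Measure.comp_add, Measure.comp_smul]
  have : IsProbabilityMeasure P := ⟨by rw [← barycenter_univ, hP, measure_univ]⟩
  have integral_eq : ∫ κ, concavification w κ ∂P =
      lam * concavification w μ + (1 - lam) * concavification w μ' := by
    rw [integral_add_measure ((integrable_dirac (by finiteness)).smul_measure ENNReal.ofReal_ne_top)
      ((integrable_dirac (by finiteness)).smul_measure ENNReal.ofReal_ne_top),
      integral_smul_measure, integral_smul_measure, integral_dirac, integral_dirac,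
      ENNReal.toReal_ofReal h_nonneg, ENNReal.toReal_ofReal (sub_nonneg.2 h_le_one),
      smul_eq_mul, smul_eq_mul]
  rw [← integral_eq]
  exact integral_concavification_le hw hC (p := ⟨P, this⟩) (mem_infoPolicies_iff.2 hP)

end RealConcavification

section ReceiverBestResponses

variable {A Θ : Type*} [TopologicalSpace A] [TopologicalSpace Θ] [CompactSpace Θ]
  [MeasurableSpace Θ] [OpensMeasurableSpace Θ] {uS uR : A → Θ → ℝ}

lemma continuous_expectedUtility {u : A → Θ → ℝ} (hu : Continuous fun p : A × Θ => u p.1 p.2) :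
    Continuous fun q : A × ProbabilityMeasure Θ => ∫ θ, u q.1 θ ∂(q.2 : Measure Θ) :=
  continuous_integral_prod.comp
    (((ContinuousMap.curry ⟨_, hu⟩).continuous.comp continuous_fst).prodMk continuous_snd)

lemma isClosed_setOf_mem_bestResponses (hR : Continuous fun p : A × Θ => uR p.1 p.2) :
    IsClosed {q : A × ProbabilityMeasure Θ | q.1 ∈ bestResponses uR q.2} := by
  have setOf_eq : {q : A × ProbabilityMeasure Θ | q.1 ∈ bestResponses uR q.2} =
      ⋂ a', {q | ∫ θ, uR a' θ ∂(q.2 : Measure Θ) ≤ ∫ θ, uR q.1 θ ∂(q.2 : Measure Θ)} :=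
    by ext; simp [bestResponses]
  rw [setOf_eq]
  exact isClosed_iInter fun a' => isClosed_le
    ((continuous_expectedUtility hR).comp (continuous_const.prodMk continuous_snd))
    (continuous_expectedUtility hR)

variable [CompactSpace A]

lemma isCompact_senderEU_image_bestResponses (hS : Continuous fun p : A × Θ => uS p.1 p.2)
    (hR : Continuous fun p : A × Θ => uR p.1 p.2) (μ : ProbabilityMeasure Θ) :
    IsCompact (senderEU uS μ '' bestResponses uR μ) :=
  (((isClosed_setOf_mem_bestResponses hR).preimage (Continuous.prodMk_left μ)).isCompact).image
    ((continuous_expectedUtility hS).comp (Continuous.prodMk_left μ))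

lemma wFun_le (hS : Continuous fun p : A × Θ => uS p.1 p.2)
    (hR : Continuous fun p : A × Θ => uR p.1 p.2) {μ : ProbabilityMeasure Θ} {a : A}
    (ha : a ∈ bestResponses uR μ) : wFun uS uR μ ≤ senderEU uS μ a :=
  csInf_le (isCompact_senderEU_image_bestResponses hS hR μ).bddBelow (Set.mem_image_of_mem _ ha)

variable [Nonempty A]

lemma bestResponses_nonempty (hR : Continuous fun p : A × Θ => uR p.1 p.2)
    (μ : ProbabilityMeasure Θ) : (bestResponses uR μ).Nonempty := by
  obtain ⟨a, -, ha⟩ := isCompact_univ.exists_isMaxOn Set.univ_nonempty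
    ((continuous_expectedUtility hR).comp (Continuous.prodMk_left μ)).continuousOn
  exact ⟨a, fun a' => ha (Set.mem_univ a')⟩

lemma exists_senderEU_eq_wFun (hS : Continuous fun p : A × Θ => uS p.1 p.2)
    (hR : Continuous fun p : A × Θ => uR p.1 p.2) (μ : ProbabilityMeasure Θ) :
    ∃ a ∈ bestResponses uR μ, senderEU uS μ a = wFun uS uR μ :=
  (isCompact_senderEU_image_bestResponses hS hR μ).sInf_mem ((bestResponses_nonempty hR μ).image _)

lemma lowerSemicontinuous_wFun (hS : Continuous fun p : A × Θ => uS p.1 p.2)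
    (hR : Continuous fun p : A × Θ => uR p.1 p.2) :
    LowerSemicontinuous (wFun uS uR : ProbabilityMeasure Θ → ℝ) := by
  rw [lowerSemicontinuous_iff_isClosed_preimage]
  intro y
  have sublevel_eq : wFun uS uR ⁻¹' Set.Iic y = Prod.snd '' ({q : A × ProbabilityMeasure Θ |
      q.1 ∈ bestResponses uR q.2} ∩ {q | senderEU uS q.2 q.1 ≤ y}) := by
    ext μ
    constructor
    · intro hμ
      obtain ⟨a, ha, ha_eq⟩ := exists_senderEU_eq_wFun hS hR μ
      exact ⟨(a, μ), ⟨ha, ha_eq.trans_le hμ⟩, rfl⟩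
    · rintro ⟨⟨a, μ⟩, ⟨ha, hy⟩, rfl⟩
      exact (wFun_le hS hR ha).trans hy
  rw [sublevel_eq]
  exact isClosedMap_snd_of_compactSpace _ ((isClosed_setOf_mem_bestResponses hR).inter
    (isClosed_le (continuous_expectedUtility hS) continuous_const))

lemma exists_forall_abs_wFun_le (hS : Continuous fun p : A × Θ => uS p.1 p.2)
    (hR : Continuous fun p : A × Θ => uR p.1 p.2) :
    ∃ C : ℝ, ∀ μ : ProbabilityMeasure Θ, |wFun uS uR μ| ≤ C := by
  let u : C(A × Θ, ℝ) := ⟨_, hS⟩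
  refine ⟨‖u‖, fun μ => ?_⟩
  obtain ⟨a, -, ha_eq⟩ := exists_senderEU_eq_wFun hS hR μ
  have integral_le : |∫ θ, u (a, θ) ∂(μ : Measure Θ)| ≤ ‖u‖ := by
    simpa using norm_integral_le_of_norm_le_const (μ := (μ : Measure Θ))
      (ae_of_all _ fun θ => u.norm_coe_le_norm (a, θ))
  exact ha_eq ▸ integral_le

end ReceiverBestResponses

theorem wHat_lowerSemicontinuous_concave_idempotent_general
    {A Θ : Type*}
    [TopologicalSpace A] [CompactSpace A] [Nonempty A]
    [TopologicalSpace Θ] [CompactSpace Θ] [TopologicalSpace.MetrizableSpace Θ]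
    [MeasurableSpace Θ] [BorelSpace Θ]
    (uS uR : A → Θ → ℝ)
    (hS : Continuous fun p : A × Θ => uS p.1 p.2)
    (hR : Continuous fun p : A × Θ => uR p.1 p.2)
    (μ0 : ProbabilityMeasure Θ) :
    LowerSemicontinuous (wHat uS uR : ProbabilityMeasure Θ → ℝ) ∧
    (∀ (μ μ' ν : ProbabilityMeasure Θ) (lam : ℝ), 0 ≤ lam → lam ≤ 1 →
      (ν : Measure Θ) =
        ENNReal.ofReal lam • (μ : Measure Θ) + ENNReal.ofReal (1 - lam) • (μ' : Measure Θ) →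
      lam * wHat uS uR μ + (1 - lam) * wHat uS uR μ' ≤ wHat uS uR ν) ∧
    (∀ pbar ∈ infoPolicies μ0,
      ∫ ν, wHat uS uR ν ∂(pbar : Measure (ProbabilityMeasure Θ)) ≤ wHat uS uR μ0) := by
  obtain ⟨C, hC⟩ := exists_forall_abs_wFun_le (Θ := Θ) hS hR
  have hw : LowerSemicontinuous (wFun uS uR : ProbabilityMeasure Θ → ℝ) :=
    lowerSemicontinuous_wFun hS hR
  have wHat_eq : (wHat uS uR : ProbabilityMeasure Θ → ℝ) = concavification (wFun uS uR) := rfl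
  rw [wHat_eq]
  exact ⟨lowerSemicontinuous_concavification hw hC,
    fun μ μ' ν lam => convexComb_le_concavification hw hC,
    fun pbar => integral_concavification_le hw hC⟩

/-- **Properties of `ŵ`.** The function `ŵ : ΔΘ → ℝ` is lower semicontinuous (with
respect to the weak* topology), concave (along convex combinations of probability
measures), and satisfies `ŵ(μ0) ≥ ∫ ŵ dp̄` for every information policy `p̄ ∈ I(μ0)`. -/
theorem wHat_lowerSemicontinuous_concave_idempotent
    {A Θ : Type*}
    [TopologicalSpace A] [CompactSpace A] [TopologicalSpace.MetrizableSpace A] [Nonempty A]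
    [MeasurableSpace A] [BorelSpace A]
    [TopologicalSpace Θ] [CompactSpace Θ] [TopologicalSpace.MetrizableSpace Θ] [Nonempty Θ]
    [MeasurableSpace Θ] [BorelSpace Θ]
    (uS uR : A → Θ → ℝ)
    (hS : Continuous fun p : A × Θ => uS p.1 p.2)
    (hR : Continuous fun p : A × Θ => uR p.1 p.2)
    (μ0 : ProbabilityMeasure Θ) :
    LowerSemicontinuous (wHat uS uR : ProbabilityMeasure Θ → ℝ) ∧
    (∀ (μ μ' ν : ProbabilityMeasure Θ) (lam : ℝ), 0 ≤ lam → lam ≤ 1 →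
      (ν : Measure Θ) =
        ENNReal.ofReal lam • (μ : Measure Θ) + ENNReal.ofReal (1 - lam) • (μ' : Measure Θ) →
      lam * wHat uS uR μ + (1 - lam) * wHat uS uR μ' ≤ wHat uS uR ν) ∧
    (∀ pbar ∈ infoPolicies μ0,
      ∫ ν, wHat uS uR ν ∂(pbar : Measure (ProbabilityMeasure Θ)) ≤ wHat uS uR μ0) :=
  wHat_lowerSemicontinuous_concave_idempotent_general uS uR hS hR μ0
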